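/- Let m' ≥ 0 and k ≥ 2 be integers. There exists a constant C depending only on m' and k such that for every smooth function g : ℝ³ → ℝ all of whose partial derivatives of order ≤ m'+k+1 are square-integrable on ℝ³, ‖g‖_{W^{m',∞}(ℝ³)} ≤ C · ‖g‖_{H^{m'+k}(ℝ³)}^{1/2} · ‖∂_z g‖_{H^{m'+k}(ℝ³)}^{1/2}. -/

import Mathlib

/-!
Write `f = ∂^γ g` with `|γ| ≤ m'`. For a smooth integrable function `h` whose mixed derivatives
`∂_x^a ∂_y^b ∂_z^c h` with `a, b, c ≤ 1` are integrable, the fundamental theorem of calculus in each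
variable gives `|h| ≤ ∫ |∂_x ∂_y ∂_z h|` (`enorm_le_lintegral_mixed`). Applied to `h = f²`, the
Leibniz rule yields
`∂_x ∂_y ∂_z (f²) = 2 (f f_xyz + f_x f_yz + f_y f_xz + f_xy f_z)`,
where every product pairs a derivative of `f` of order at most `2` with a derivative of `∂_z f` of
order at most `2`. Cauchy–Schwarz then gives `f² ≤ 8 ‖g‖_{H^{m'+2}} ‖∂_z g‖_{H^{m'+2}}`
(`sq_le_of_bounds`), so that `C = √8` works for all `m'` and all `k ≥ 2`.

To avoid discussing decay or integrability on individual lines, the fundamental theorem of calculus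
is used in the averaged form `|u t| ≤ A ∫ |u| + ∫ |u'|` (`enorm_le_oneDim`), which holds in `ℝ≥0∞`
for every `A > 0`; it is iterated over the three variables with Tonelli (`lmarginal_step`) before
letting `A → 0`.
-/

open MeasureTheory Set

noncomputable section

/-- Points of ℝ³, written `(x, y, z)`. -/
abbrev V3 := Fin 3 → ℝ

/-- Partial derivative in the `i`-th coordinate direction. -/
def pd (i : Fin 3) (f : V3 → ℝ) : V3 → ℝ :=
  fun x => fderiv ℝ f x (Pi.single i 1)

/-- Iterated partial derivative for a multi-index `γ = (γ₁, γ₂, γ₃)`. -/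
def pdM (γ : ℕ × ℕ × ℕ) (f : V3 → ℝ) : V3 → ℝ :=
  (pd 0)^[γ.1] ((pd 1)^[γ.2.1] ((pd 2)^[γ.2.2] f))

/-- Multi-indices in ℕ³ of total degree at most `m`. -/
def midx (m : ℕ) : Finset (ℕ × ℕ × ℕ) :=
  (Finset.range (m + 1) ×ˢ Finset.range (m + 1) ×ˢ Finset.range (m + 1)).filter
    (fun γ => γ.1 + γ.2.1 + γ.2.2 ≤ m)

/-- Square of the `H^m(ℝ³)` norm of a scalar function. -/
def HnormSq (m : ℕ) (f : V3 → ℝ) : ℝ :=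
  ∑ γ ∈ midx m, ∫ x : V3, (pdM γ f x) ^ 2

/-- The `H^m(ℝ³)` norm of a scalar function. -/
def Hnorm (m : ℕ) (f : V3 → ℝ) : ℝ :=
  Real.sqrt (HnormSq m f)

/-- `W^{m,∞}(ℝ³)` norm of a scalar function:
`max_{|γ| ≤ m} ess sup |∂^γ g|`. -/
def WinfNorm (m : ℕ) (f : V3 → ℝ) : ℝ :=
  ⨆ γ : midx m, essSup (fun x => |pdM (γ : ℕ × ℕ × ℕ) f x|) volume

end

/-! ### The estimate on a line -/

/-- One-dimensional estimate: average `|u t| ≤ |u s| + ∫ |u'|` over `s` in an interval of length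
`1 / A` starting at `t`. Both integrals may be infinite. As `A → 0` the zeroth-order term drops out
whenever `u` is integrable. -/
lemma enorm_le_oneDim {u u' : ℝ → ℝ} (hu : ∀ s, HasDerivAt u (u' s) s) (hu' : Continuous u')
    {A : NNReal} (hA : 0 < A) (t : ℝ) :
    ‖u t‖ₑ ≤ A * (∫⁻ s, ‖u s‖ₑ) + ∫⁻ s, ‖u' s‖ₑ := by
  have hpt : ∀ s ∈ Ioc t (t + (A : ℝ)⁻¹), ‖u t‖ₑ ≤ ‖u s‖ₑ + ∫⁻ r, ‖u' r‖ₑ := by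
    intro s hs
    have hftc : ∫ r in t..s, u' r = u s - u t :=
      intervalIntegral.integral_eq_sub_of_hasDerivAt (fun r _ => hu r)
        (hu'.intervalIntegrable _ _)
    rw [intervalIntegral.integral_of_le hs.1.le] at hftc
    calc ‖u t‖ₑ = ‖u s - ∫ r in Ioc t s, u' r‖ₑ := by rw [hftc]; congr 1; ring
      _ ≤ ‖u s‖ₑ + ‖∫ r in Ioc t s, u' r‖ₑ := enorm_sub_le
      _ ≤ ‖u s‖ₑ + ∫⁻ r in Ioc t s, ‖u' r‖ₑ := by
          gcongr; exact enorm_integral_le_lintegral_enorm _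
      _ ≤ _ := by gcongr; exact Measure.restrict_le_self
  have hvol : volume (Ioc t (t + (A : ℝ)⁻¹)) = (A : ENNReal)⁻¹ := by
    rw [Real.volume_Ioc, add_sub_cancel_left, ENNReal.ofReal_inv_of_pos (by exact_mod_cast hA),
      ENNReal.ofReal_coe_nnreal]
  have hint := setLIntegral_mono' (μ := volume) measurableSet_Ioc hpt
  have hucont : Continuous u := continuous_iff_continuousAt.2 fun s => (hu s).continuousAt
  rw [lintegral_add_left (by fun_prop), setLIntegral_const, setLIntegral_const, hvol] at hint
  have hA0 : (A : ENNReal) ≠ 0 := by exact_mod_cast hA.ne'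
  have hAt : (A : ENNReal) ≠ ⊤ := ENNReal.coe_ne_top
  calc ‖u t‖ₑ = A * (‖u t‖ₑ * (A : ENNReal)⁻¹) := by
        rw [mul_left_comm, ENNReal.mul_inv_cancel hA0 hAt, mul_one]
    _ ≤ A * ((∫⁻ s in Ioc t (t + (A : ℝ)⁻¹), ‖u s‖ₑ) + (∫⁻ r, ‖u' r‖ₑ) * (A : ENNReal)⁻¹) := by
        gcongr
    _ = A * (∫⁻ s in Ioc t (t + (A : ℝ)⁻¹), ‖u s‖ₑ) + ∫⁻ r, ‖u' r‖ₑ := by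
        rw [mul_add, mul_left_comm (A : ENNReal), ENNReal.mul_inv_cancel hA0 hAt, mul_one]
    _ ≤ _ := by gcongr; exact Measure.restrict_le_self

/-! ### Calculus of partial derivatives -/

lemma contDiff_pd {f : V3 → ℝ} (hf : ContDiff ℝ (⊤ : ℕ∞) f) (i : Fin 3) :
    ContDiff ℝ (⊤ : ℕ∞) (pd i f) := by
  unfold pd
  exact (hf.fderiv_right (m := (⊤ : ℕ∞)) (by simp)).clm_apply contDiff_const

lemma pd_mul {u v : V3 → ℝ} (hu : ContDiff ℝ (⊤ : ℕ∞) u) (hv : ContDiff ℝ (⊤ : ℕ∞) v)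
    (i : Fin 3) : pd i (u * v) = pd i u * v + u * pd i v := by
  funext x
  simp only [pd, Pi.add_apply, Pi.mul_apply]
  rw [fderiv_mul (hu.differentiable (by simp) x) (hv.differentiable (by simp) x)]
  simp
  ring

lemma pd_add {u v : V3 → ℝ} (hu : ContDiff ℝ (⊤ : ℕ∞) u) (hv : ContDiff ℝ (⊤ : ℕ∞) v)
    (i : Fin 3) : pd i (u + v) = pd i u + pd i v := by
  funext x
  simp only [pd, Pi.add_apply]
  rw [fderiv_add (hu.differentiable (by simp) x) (hv.differentiable (by simp) x)]
  simp

lemma pd_comm {f : V3 → ℝ} (hf : ContDiff ℝ (⊤ : ℕ∞) f) (i j : Fin 3) :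
    pd i (pd j f) = pd j (pd i f) := by
  have key : ∀ (v w x : V3), fderiv ℝ (fun y => fderiv ℝ f y v) x w
      = fderiv ℝ (fderiv ℝ f) x w v := by
    intro v w x
    have hd : DifferentiableAt ℝ (fderiv ℝ f) x :=
      (hf.fderiv_right (m := (⊤ : ℕ∞)) (by simp)).differentiable (by simp) x
    rw [fderiv_clm_apply hd (differentiableAt_const v)]
    simp
  funext x
  unfold pd
  rw [key, key]
  have htwo : minSmoothness ℝ 2 ≤ ((⊤ : ℕ∞) : WithTop ℕ∞) := by
    simpa using WithTop.coe_le_coe.2 (le_top (a := (2 : ℕ∞)))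
  exact (hf.contDiffAt.isSymmSndFDerivAt htwo).eq _ _

/-! ### Sup bound by the mixed derivative -/

/-- The one-dimensional estimate in the `i`-th variable, integrated over the variables in `s`.
Working with `ℝ≥0∞`-valued marginals avoids any integrability question on individual lines. -/
lemma lmarginal_step {h : V3 → ℝ} (hh : ContDiff ℝ (⊤ : ℕ∞) h) {s : Finset (Fin 3)} {i : Fin 3}
    (hi : i ∉ s) {A : NNReal} (hA : 0 < A) (x : V3) :
    (∫⋯∫⁻_s, (fun y => ‖h y‖ₑ) ∂fun _ => volume) x
      ≤ A * (∫⋯∫⁻_insert i s, (fun y => ‖h y‖ₑ) ∂fun _ => volume) x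
        + (∫⋯∫⁻_insert i s, (fun y => ‖pd i h y‖ₑ) ∂fun _ => volume) x := by
  have hm1 : Measurable fun y => ‖h y‖ₑ := by
    have := hh.continuous; fun_prop
  have hm2 : Measurable fun y => ‖pd i h y‖ₑ := by
    have := (contDiff_pd hh i).continuous; fun_prop
  have hone : ∀ y : V3, ‖h y‖ₑ ≤ A * (∫⋯∫⁻_{i}, (fun y => ‖h y‖ₑ) ∂fun _ => volume) y
        + (∫⋯∫⁻_{i}, (fun y => ‖pd i h y‖ₑ) ∂fun _ => volume) y := by
    intro y
    rw [lmarginal_singleton, lmarginal_singleton]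
    have := enorm_le_oneDim (u := fun t => h (Function.update y i t))
      (u' := fun t => pd i h (Function.update y i t)) (fun t => ?_) ?_ hA (y i)
    · simpa using this
    · exact ((hh.differentiable (by simp) _).hasFDerivAt).comp_hasDerivAt t
        (hasDerivAt_update y i t)
    · exact (contDiff_pd hh i).continuous.comp (continuous_const.update i continuous_id)
  have hmar : ∀ {F : V3 → ENNReal}, Measurable F →
      Measurable (∫⋯∫⁻_{i}, F ∂fun _ => (volume : Measure ℝ)) := fun hF => hF.lmarginal _
  have hsplit : ∀ {F : V3 → ENNReal}, Measurable F →
      (∫⋯∫⁻_insert i s, F ∂fun _ => (volume : Measure ℝ))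
        = ∫⋯∫⁻_s, (∫⋯∫⁻_{i}, F ∂fun _ => volume) ∂fun _ => volume := by
    intro F hF
    rw [Finset.insert_eq, Finset.union_comm,
      lmarginal_union _ F hF (Finset.disjoint_singleton_right.mpr hi)]
  rw [hsplit hm1, hsplit hm2]
  calc _ ≤ (∫⋯∫⁻_s, (fun y => A * (∫⋯∫⁻_{i}, (fun y => ‖h y‖ₑ) ∂fun _ => volume) y
        + (∫⋯∫⁻_{i}, (fun y => ‖pd i h y‖ₑ) ∂fun _ => volume) y) ∂fun _ => volume) x :=
        lmarginal_mono hone x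
    _ = _ := by
      have h1 := (hmar hm1).comp (measurable_updateFinset (s := s) (x := x))
      exact (lintegral_add_left (h1.const_mul _) _).trans
        (congrArg (· + _) (lintegral_const_mul _ h1))

/-- If all mixed derivatives `∂_x^a ∂_y^b ∂_z^c h` with `a, b, c ≤ 1` are integrable, then
`|h| ≤ ∫ |∂_x ∂_y ∂_z h|` everywhere: the one-dimensional estimate is applied in `z`, `y`, `x` in
turn, and every term other than the top one carries a factor `A`, which is sent to `0`. -/
lemma enorm_le_lintegral_mixed {h : V3 → ℝ} (hh : ContDiff ℝ (⊤ : ℕ∞) h)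
    (hint : ∀ a ≤ 1, ∀ b ≤ 1, ∀ c ≤ 1, Integrable (pdM (a, b, c) h)) (x : V3) :
    ‖h x‖ₑ ≤ ∫⁻ y, ‖pd 0 (pd 1 (pd 2 h)) y‖ₑ := by
  have hlift : ∀ a ≤ 1, ∀ b ≤ 1, ∀ c ≤ 1, ∃ N : NNReal, ∫⁻ y, ‖pdM (a, b, c) h y‖ₑ = N :=
    fun a ha b hb c hc =>
      ⟨_, (ENNReal.coe_toNNReal (hint a ha b hb c hc).hasFiniteIntegral.ne).symm⟩
  obtain ⟨n000, h000⟩ := hlift 0 (by simp) 0 (by simp) 0 (by simp)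
  obtain ⟨n001, h001⟩ := hlift 0 (by simp) 0 (by simp) 1 (by simp)
  obtain ⟨n010, h010⟩ := hlift 0 (by simp) 1 (by simp) 0 (by simp)
  obtain ⟨n011, h011⟩ := hlift 0 (by simp) 1 (by simp) 1 (by simp)
  obtain ⟨n100, h100⟩ := hlift 1 (by simp) 0 (by simp) 0 (by simp)
  obtain ⟨n101, h101⟩ := hlift 1 (by simp) 0 (by simp) 1 (by simp)
  obtain ⟨n110, h110⟩ := hlift 1 (by simp) 1 (by simp) 0 (by simp)
  obtain ⟨n111, h111⟩ := hlift 1 (by simp) 1 (by simp) 1 (by simp)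
  simp only [pdM, Function.iterate_zero, Function.iterate_one, id] at h000 h001 h010 h011
  simp only [pdM, Function.iterate_zero, Function.iterate_one, id] at h100 h101 h110 h111
  have huniv : (insert 0 (insert 1 (insert 2 ∅)) : Finset (Fin 3)) = Finset.univ := by decide
  have hz := contDiff_pd hh 2
  have main : ∀ A : NNReal, 0 < A → ‖h x‖₊ ≤
      A * (A * (A * n000 + n100) + (A * n010 + n110))
        + (A * (A * n001 + n101) + (A * n011 + n111)) := by
    intro A hA
    have s3 : ∀ {w : V3 → ℝ}, ContDiff ℝ (⊤ : ℕ∞) w → _ := fun {w} hw =>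
      lmarginal_step (s := insert 1 (insert 2 ∅)) (i := 0) hw (by decide) hA x
    have s2 : ∀ {w : V3 → ℝ}, ContDiff ℝ (⊤ : ℕ∞) w → _ := fun {w} hw =>
      lmarginal_step (s := insert 2 ∅) (i := 1) hw (by decide) hA x
    have s1 := lmarginal_step (s := ∅) (i := 2) hh (by decide) hA x
    simp only [huniv, lmarginal_univ, ← volume_pi] at s3
    have a1 := s3 hh
    have a2 := s3 (contDiff_pd hh 1)
    have a3 := s3 hz
    have a4 := s3 (contDiff_pd hz 1)
    rw [h000, h100] at a1
    rw [h010, h110] at a2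
    rw [h001, h101] at a3
    rw [h011, h111] at a4
    rw [lmarginal_empty] at s1
    have b1 := s2 hh
    have b2 := s2 hz
    have fin : ‖h x‖ₑ ≤
      A * (A * (A * n000 + n100) + (A * n010 + n110))
        + (A * (A * n001 + n101) + (A * n011 + n111)) := by
      refine s1.trans (add_le_add (mul_le_mul_right (b1.trans ?_) _) (b2.trans ?_))
      · gcongr
      · gcongr
    rw [enorm_eq_nnnorm] at fin
    exact_mod_cast fin
  have hlim : Filter.Tendsto (fun A : NNReal => A * (A * (A * n000 + n100) + (A * n010 + n110))
        + (A * (A * n001 + n101) + (A * n011 + n111))) (nhdsWithin 0 (Ioi 0)) (nhds n111) := by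
    have hc : Continuous (fun A : NNReal => A * (A * (A * n000 + n100) + (A * n010 + n110))
        + (A * (A * n001 + n101) + (A * n011 + n111))) := by fun_prop
    have := (hc.tendsto 0).mono_left (nhdsWithin_le_nhds (s := Ioi 0))
    simpa using this
  rw [h111, enorm_eq_nnnorm]
  exact_mod_cast ge_of_tendsto hlim (eventually_mem_nhdsWithin.mono fun A hA => main A hA)

/-! ### The anisotropic estimate for a single function -/

lemma integrable_mul_of_sq {u v : V3 → ℝ} (hu : MemLp u 2) (hv : MemLp v 2) :
    Integrable (u * v) := hu.integrable_mul hv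

/-- Cauchy–Schwarz in `L²(ℝ³)`, with prescribed bounds on the two norms. -/
lemma integral_abs_mul_le {u v : V3 → ℝ} {a b : ℝ} (ha : 0 ≤ a) (hb : 0 ≤ b)
    (hu : MemLp u 2) (hv : MemLp v 2)
    (hua : ∫ x, u x ^ 2 ≤ a ^ 2) (hvb : ∫ x, v x ^ 2 ≤ b ^ 2) :
    ∫ x, |(u * v) x| ≤ a * b := by
  have h := integral_mul_norm_le_Lp_mul_Lq (μ := (volume : Measure V3)) (f := u) (g := v)
    Real.HolderConjugate.two_two (by simpa using hu) (by simpa using hv)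
  simp only [Real.norm_eq_abs, Real.rpow_ofNat, sq_abs, ← Real.sqrt_eq_rpow] at h
  calc ∫ x, |(u * v) x| = ∫ x, |u x| * |v x| := by simp [abs_mul]
    _ ≤ _ := h
    _ ≤ a * b := by
      gcongr
      · exact Real.sqrt_le_left ha |>.mpr hua
      · exact Real.sqrt_le_left hb |>.mpr hvb

lemma contDiff_mul' {u v : V3 → ℝ} (hu : ContDiff ℝ (⊤ : ℕ∞) u) (hv : ContDiff ℝ (⊤ : ℕ∞) v) :
    ContDiff ℝ (⊤ : ℕ∞) (u * v) := hu.mul hv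

lemma contDiff_add' {u v : V3 → ℝ} (hu : ContDiff ℝ (⊤ : ℕ∞) u) (hv : ContDiff ℝ (⊤ : ℕ∞) v) :
    ContDiff ℝ (⊤ : ℕ∞) (u + v) := hu.add hv

lemma integral_abs_add_le {u v : V3 → ℝ} {c d : ℝ} (hu : Integrable u ∧ ∫ x, |u x| ≤ c)
    (hv : Integrable v ∧ ∫ x, |v x| ≤ d) :
    Integrable (u + v) ∧ ∫ x, |(u + v) x| ≤ c + d := by
  refine ⟨hu.1.add hv.1, ?_⟩
  calc ∫ x, |(u + v) x| ≤ ∫ x, (|u x| + |v x|) :=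
        integral_mono (hu.1.add hv.1).abs (hu.1.abs.add hv.1.abs) fun x => abs_add_le _ _
    _ = (∫ x, |u x|) + ∫ x, |v x| := integral_add hu.1.abs hv.1.abs
    _ ≤ c + d := add_le_add hu.2 hv.2

/-- The core estimate, obtained by applying `enorm_le_lintegral_mixed` to `f²`. The derivative
`∂_x ∂_y ∂_z (f²)` is a sum of eight products; in each of them exactly one factor is
differentiated in `z`, so that one factor is controlled by `a` and the other by `b`. -/
lemma sq_le_of_bounds {f : V3 → ℝ} (hf : ContDiff ℝ (⊤ : ℕ∞) f) {a b : ℝ} (ha : 0 ≤ a)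
    (hb : 0 ≤ b)
    (hL : ∀ i ≤ 1, ∀ j ≤ 1, ∀ l ≤ 1, MemLp (pdM (i, j, l) f) 2)
    (hA : ∀ i ≤ 1, ∀ j ≤ 1, ∫ x, pdM (i, j, 0) f x ^ 2 ≤ a ^ 2)
    (hB : ∀ i ≤ 1, ∀ j ≤ 1, ∫ x, pdM (i, j, 1) f x ^ 2 ≤ b ^ 2) (x : V3) :
    f x ^ 2 ≤ 8 * (a * b) := by
  have l000 := hL 0 (by simp) 0 (by simp) 0 (by simp)
  have l001 := hL 0 (by simp) 0 (by simp) 1 (by simp)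
  have l010 := hL 0 (by simp) 1 (by simp) 0 (by simp)
  have l011 := hL 0 (by simp) 1 (by simp) 1 (by simp)
  have l100 := hL 1 (by simp) 0 (by simp) 0 (by simp)
  have l101 := hL 1 (by simp) 0 (by simp) 1 (by simp)
  have l110 := hL 1 (by simp) 1 (by simp) 0 (by simp)
  have l111 := hL 1 (by simp) 1 (by simp) 1 (by simp)
  have a00 := hA 0 (by simp) 0 (by simp)
  have a01 := hA 0 (by simp) 1 (by simp)
  have a10 := hA 1 (by simp) 0 (by simp)
  have a11 := hA 1 (by simp) 1 (by simp)
  have b00 := hB 0 (by simp) 0 (by simp)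
  have b01 := hB 0 (by simp) 1 (by simp)
  have b10 := hB 1 (by simp) 0 (by simp)
  have b11 := hB 1 (by simp) 1 (by simp)
  simp only [pdM, Function.iterate_zero, Function.iterate_one, id] at l000 l001 l010 l011
  simp only [pdM, Function.iterate_zero, Function.iterate_one, id] at l100 l101 l110 l111
  simp only [pdM, Function.iterate_zero, Function.iterate_one, id] at a00 a01 a10 a11
  simp only [pdM, Function.iterate_zero, Function.iterate_one, id] at b00 b01 b10 b11
  have hint : ∀ i ≤ 1, ∀ j ≤ 1, ∀ l ≤ 1, Integrable (pdM (i, j, l) (f * f)) := by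
    intro i hi j hj l hl
    interval_cases i <;> interval_cases j <;> interval_cases l <;>
    simp (disch := (repeat' first
      | assumption | apply contDiff_pd | apply contDiff_mul' | apply contDiff_add'))
      only [pdM, Function.iterate_zero, Function.iterate_one, id, pd_mul, pd_add] <;>
    (repeat' first | apply Integrable.add | apply integrable_mul_of_sq) <;> assumption
  have hsup := enorm_le_lintegral_mixed (contDiff_mul' hf hf) hint x
  have c1 : ∀ {u v : V3 → ℝ}, MemLp u 2 → MemLp v 2 → ∫ x, u x ^ 2 ≤ a ^ 2 →
      ∫ x, v x ^ 2 ≤ b ^ 2 → Integrable (u * v) ∧ ∫ x, |(u * v) x| ≤ a * b :=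
    fun hu hv h1 h2 => ⟨integrable_mul_of_sq hu hv, integral_abs_mul_le ha hb hu hv h1 h2⟩
  have c2 : ∀ {u v : V3 → ℝ}, MemLp u 2 → MemLp v 2 → ∫ x, u x ^ 2 ≤ b ^ 2 →
      ∫ x, v x ^ 2 ≤ a ^ 2 → Integrable (u * v) ∧ ∫ x, |(u * v) x| ≤ a * b :=
    fun hu hv h1 h2 => by rw [mul_comm]; exact c1 hv hu h2 h1
  have hw : Integrable (pd 0 (pd 1 (pd 2 (f * f)))) ∧
      ∫ x, |pd 0 (pd 1 (pd 2 (f * f))) x| ≤ 8 * (a * b) := by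
    have h8 : 8 * (a * b) = ((a * b + a * b) + (a * b + a * b))
      + ((a * b + a * b) + (a * b + a * b)) := by ring
    rw [h8]
    simp (disch := (repeat' first
      | assumption | apply contDiff_pd | apply contDiff_mul' | apply contDiff_add'))
      only [pd_mul, pd_add]
    -- The Leibniz expansion is a balanced binary tree of sums with eight leaves.
    refine integral_abs_add_le (integral_abs_add_le (integral_abs_add_le ?_ ?_)
      (integral_abs_add_le ?_ ?_)) (integral_abs_add_le (integral_abs_add_le ?_ ?_)
      (integral_abs_add_le ?_ ?_)) <;>
    first
    | exact c1 (by assumption) (by assumption) (by assumption) (by assumption)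
    | exact c2 (by assumption) (by assumption) (by assumption) (by assumption)
  rw [← ofReal_integral_norm_eq_lintegral_enorm hw.1, ← ofReal_norm,
    ENNReal.ofReal_le_ofReal_iff (integral_nonneg fun _ => norm_nonneg _)] at hsup
  calc f x ^ 2 = ‖(f * f) x‖ := by simp [sq]
    _ ≤ _ := hsup
    _ ≤ _ := hw.2

/-! ### Multi-index derivatives -/

lemma contDiff_iterate {f : V3 → ℝ} (hf : ContDiff ℝ (⊤ : ℕ∞) f) (i : Fin 3) (n : ℕ) :
    ContDiff ℝ (⊤ : ℕ∞) ((pd i)^[n] f) := by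
  induction n with
  | zero => exact hf
  | succ n ih => rw [Function.iterate_succ_apply']; exact contDiff_pd ih i

lemma contDiff_pdM {f : V3 → ℝ} (hf : ContDiff ℝ (⊤ : ℕ∞) f) (γ : ℕ × ℕ × ℕ) :
    ContDiff ℝ (⊤ : ℕ∞) (pdM γ f) :=
  contDiff_iterate (contDiff_iterate (contDiff_iterate hf 2 _) 1 _) 0 _

lemma pd_iterate_comm {f : V3 → ℝ} (hf : ContDiff ℝ (⊤ : ℕ∞) f) (i j : Fin 3) (n : ℕ) :
    pd j ((pd i)^[n] f) = (pd i)^[n] (pd j f) := by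
  induction n with
  | zero => rfl
  | succ n ih =>
    rw [Function.iterate_succ_apply', Function.iterate_succ_apply',
      pd_comm (contDiff_iterate hf i n), ih]

lemma pd_zero_pdM (f : V3 → ℝ) (a b c : ℕ) : pd 0 (pdM (a, b, c) f) = pdM (a + 1, b, c) f :=
  (Function.iterate_succ_apply' _ _ _).symm

lemma pd_one_pdM {f : V3 → ℝ} (hf : ContDiff ℝ (⊤ : ℕ∞) f) (a b c : ℕ) :
    pd 1 (pdM (a, b, c) f) = pdM (a, b + 1, c) f := by
  simp only [pdM]
  rw [pd_iterate_comm (contDiff_iterate (contDiff_iterate hf 2 _) 1 _),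
    Function.iterate_succ_apply']

lemma pd_two_pdM {f : V3 → ℝ} (hf : ContDiff ℝ (⊤ : ℕ∞) f) (a b c : ℕ) :
    pd 2 (pdM (a, b, c) f) = pdM (a, b, c + 1) f := by
  simp only [pdM]
  rw [pd_iterate_comm (contDiff_iterate (contDiff_iterate hf 2 _) 1 _),
    pd_iterate_comm (contDiff_iterate hf 2 _), Function.iterate_succ_apply']

/-- Composition of multi-index derivatives. Only increments with `i, j, l ≤ 1` are needed, and they
reduce to commuting a single derivative past the others. -/
lemma pdM_pdM {f : V3 → ℝ} (hf : ContDiff ℝ (⊤ : ℕ∞) f) (a b c : ℕ) {i j l : ℕ} (hi : i ≤ 1)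
    (hj : j ≤ 1) (hl : l ≤ 1) :
    pdM (i, j, l) (pdM (a, b, c) f) = pdM (a + i, b + j, c + l) f := by
  rw [pdM]
  interval_cases i <;> interval_cases j <;> interval_cases l <;>
    simp [pd_zero_pdM, pd_one_pdM hf, pd_two_pdM hf]

lemma mem_midx {m a b c : ℕ} : (a, b, c) ∈ midx m ↔ a + b + c ≤ m := by
  simp only [midx, Finset.mem_filter, Finset.mem_product, Finset.mem_range]
  omega

lemma integral_sq_le_Hnorm_sq (f : V3 → ℝ) {m : ℕ} {γ : ℕ × ℕ × ℕ} (hγ : γ ∈ midx m) :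
    ∫ x, pdM γ f x ^ 2 ≤ Hnorm m f ^ 2 := by
  have hnn : ∀ γ ∈ midx m, 0 ≤ ∫ x, pdM γ f x ^ 2 :=
    fun γ _ => integral_nonneg fun x => sq_nonneg _
  rw [Hnorm, HnormSq, Real.sq_sqrt (Finset.sum_nonneg hnn)]
  exact Finset.single_le_sum hnn hγ

/-- For all integers `m' ≥ 0` and `k ≥ 2` there is `C = C(m', k)`
such that for every smooth `g : ℝ³ → ℝ` whose partial derivatives of order
`≤ m' + k + 1` are square-integrable,
`‖g‖_{W^{m',∞}(ℝ³)} ≤ C ‖g‖_{H^{m'+k}(ℝ³)}^{1/2} ‖∂_z g‖_{H^{m'+k}(ℝ³)}^{1/2}`. -/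
theorem Winf_anisotropic_bound :
    ∀ m' k : ℕ, 2 ≤ k → ∃ C : ℝ,
      ∀ g : V3 → ℝ, ContDiff ℝ (⊤ : ℕ∞) g →
        (∀ γ ∈ midx (m' + k + 1),
          Integrable (fun x : V3 => (pdM γ g x) ^ 2) volume) →
        WinfNorm m' g
          ≤ C * Real.sqrt (Hnorm (m' + k) g) * Real.sqrt (Hnorm (m' + k) (pd 2 g)) := by
  intro m' k hk
  refine ⟨Real.sqrt 8, fun g hg hint => ?_⟩
  have ha : 0 ≤ Hnorm (m' + k) g := Real.sqrt_nonneg _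
  have hb : 0 ≤ Hnorm (m' + k) (pd 2 g) := Real.sqrt_nonneg _
  refine Real.iSup_le (fun ⟨⟨a, b, c⟩, hγ⟩ => ?_) (by positivity)
  rw [mem_midx] at hγ
  refine essSup_le_of_ae_le _ (Filter.Eventually.of_forall fun x => ?_)
    (Filter.isCoboundedUnder_le_of_le _ (x := 0) fun x => abs_nonneg _)
  rw [← Real.sqrt_mul (by norm_num), ← Real.sqrt_mul (by positivity), mul_assoc]
  refine Real.abs_le_sqrt (sq_le_of_bounds (contDiff_pdM hg _) ha hb ?_ ?_ ?_ x)
  · intro i hi j hj l hl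
    rw [pdM_pdM hg _ _ _ hi hj hl,
      memLp_two_iff_integrable_sq (contDiff_pdM hg _).continuous.aestronglyMeasurable]
    exact hint _ (mem_midx.2 (by omega))
  · intro i hi j hj
    rw [pdM_pdM hg _ _ _ hi hj zero_le_one]
    exact integral_sq_le_Hnorm_sq g (mem_midx.2 (by omega))
  · intro i hi j hj
    rw [pdM_pdM hg _ _ _ hi hj le_rfl]
    -- `∂_z` is the innermost derivative of `pdM`, so one of them is absorbed into `∂_z g`.
    change ∫ x, pdM (a + i, b + j, c) (pd 2 g) x ^ 2 ≤ _
    exact integral_sq_le_Hnorm_sq (pd 2 g) (mem_midx.2 (by omega))
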